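/- arXiv:2102.03909 — 4 statements merged into one kernel-verified Lean document; each statement's English description precedes it below -/
import Mathlib

section
/- Let f : ℝ^P × X → ℝ be a parameterized scalar model such that for each x ∈ X the map θ ↦ f(θ, x) is continuously differentiable, let x_1, …, x_n ∈ X be data points and ℓ_1, …, ℓ_n : ℝ → ℝ be continuously differentiable per-example losses, and set E(θ) = (1/n) ∑_{i=1}^n ℓ_i(f(θ, x_i)). If θ : ℝ → ℝ^P is a differentiable curve satisfying θ'(t) = −∇E(θ(t)) for all t (a gradient flow of E), then for every x ∈ X the map t ↦ f(θ(t), x) is differentiable and its derivative satisfies d/dt f(θ(t), x) = −(1/n) ∑_{i=1}^n ℓ_i'(f(θ(t), x_i)) · Θ_{θ(t)}(x_i, x). (This is the empirical-loss form of Theorem 1: the function evolution induced by parameter-space gradient flow is the kernel gradient flow for the Neural Tangent Kernel.) -/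
open scoped RealInnerProductSpace

/-! By linearity and the chain rule, `∇E = c ∑ᵢ ℓᵢ'(f(·, xᵢ)) ∇f(·, xᵢ)`. Differentiating `f(·, x')`
along a curve pairs its gradient with the velocity, which for a gradient flow is `-∇E`; the inner
products of model gradients that appear are the values of the kernel. -/

open scoped ComplexConjugate Gradient

section GradientCalculus

variable {𝕜 F : Type*} [RCLike 𝕜] [NormedAddCommGroup F] [InnerProductSpace 𝕜 F] [CompleteSpace F]

theorem hasGradientAt_comp {φ : 𝕜 → 𝕜} {φ' : 𝕜} {g : F → 𝕜} {g' p : F}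
    (hφ : HasDerivAt φ φ' (g p)) (hg : HasGradientAt g g' p) :
    HasGradientAt (fun q ↦ φ (g q)) (conj φ' • g') p := by
  rw [hasGradientAt_iff_hasFDerivAt, map_smulₛₗ, RCLike.conj_conj]
  exact hφ.comp_hasFDerivAt p hg.hasFDerivAt

theorem hasGradientAt_const_mul (c : 𝕜) {g : F → 𝕜} {g' p : F} (hg : HasGradientAt g g' p) :
    HasGradientAt (fun q ↦ c * g q) (conj c • g') p :=
  hasGradientAt_comp (hasDerivAt_const_mul c) hg

theorem hasGradientAt_sum {ι : Type*} {s : Finset ι} {g : ι → F → 𝕜} {g' : ι → F} {p : F}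
    (hg : ∀ i ∈ s, HasGradientAt (g i) (g' i) p) :
    HasGradientAt (fun q ↦ ∑ i ∈ s, g i q) (∑ i ∈ s, g' i) p := by
  rw [hasGradientAt_iff_hasFDerivAt, map_sum]
  exact HasFDerivAt.fun_sum fun i hi ↦ (hg i hi).hasFDerivAt

theorem hasDerivAt_comp_of_hasGradientAt {g : F → 𝕜} {g' v : F} {γ : 𝕜 → F} {t : 𝕜}
    (hg : HasGradientAt g g' (γ t)) (hγ : HasDerivAt γ v t) :
    HasDerivAt (fun s ↦ g (γ s)) (inner 𝕜 g' v) t :=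
  hg.hasFDerivAt.comp_hasDerivAt t hγ

end GradientCalculus

section NeuralTangentKernel

variable {H X ι : Type*} [NormedAddCommGroup H] [InnerProductSpace ℝ H] [CompleteSpace H]

/-- The empirical Neural Tangent Kernel `Θ_θ(x, x')` of the model `f`, which governs how training
on the input `x` changes the prediction at `x'`. The parameters range over a real Hilbert space;
a model that is not differentiable at `θ` gets the junk gradient `0`. -/
noncomputable def neuralTangentKernel (f : H → X → ℝ) (θ : H) (x x' : X) : ℝ :=
  ⟪∇ (fun θ' ↦ f θ' x) θ, ∇ (fun θ' ↦ f θ' x') θ⟫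

variable [Fintype ι]

theorem gradient_const_mul_sum_loss (c : ℝ) {f : H → X → ℝ} {x : ι → X} {ℓ : ι → ℝ → ℝ} {p : H}
    (hf : ∀ i, DifferentiableAt ℝ (fun θ ↦ f θ (x i)) p)
    (hℓ : ∀ i, DifferentiableAt ℝ (ℓ i) (f p (x i))) :
    ∇ (fun θ ↦ c * ∑ i, ℓ i (f θ (x i))) p =
      c • ∑ i, deriv (ℓ i) (f p (x i)) • ∇ (fun θ ↦ f θ (x i)) p := by
  have hloss (i : ι) : HasGradientAt (fun θ ↦ ℓ i (f θ (x i)))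
      (deriv (ℓ i) (f p (x i)) • ∇ (fun θ ↦ f θ (x i)) p) p :=
    hasGradientAt_comp (hℓ i).hasDerivAt (hf i).hasGradientAt
  exact (hasGradientAt_const_mul c (hasGradientAt_sum fun i _ ↦ hloss i)).gradient

theorem inner_gradient_neg_gradient_loss (c : ℝ) {f : H → X → ℝ} {x : ι → X} {ℓ : ι → ℝ → ℝ}
    {p : H} (hf : ∀ i, DifferentiableAt ℝ (fun θ ↦ f θ (x i)) p)
    (hℓ : ∀ i, DifferentiableAt ℝ (ℓ i) (f p (x i))) (x' : X) :
    ⟪∇ (fun θ ↦ f θ x') p, -∇ (fun θ ↦ c * ∑ i, ℓ i (f θ (x i))) p⟫ =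
      -c * ∑ i, deriv (ℓ i) (f p (x i)) * neuralTangentKernel f p (x i) x' := by
  rw [gradient_const_mul_sum_loss c hf hℓ, real_inner_comm, ← neg_smul, real_inner_smul_left,
    sum_inner]
  simp only [real_inner_smul_left, neuralTangentKernel]

theorem function_evolution_is_ntk_gradient_flow_general (c : ℝ) {f : H → X → ℝ} {x : ι → X}
    {ℓ : ι → ℝ → ℝ} {θ : ℝ → H} {t : ℝ} {x' : X}
    (hf : ∀ i, DifferentiableAt ℝ (fun θ' ↦ f θ' (x i)) (θ t))
    (hf' : DifferentiableAt ℝ (fun θ' ↦ f θ' x') (θ t))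
    (hℓ : ∀ i, DifferentiableAt ℝ (ℓ i) (f (θ t) (x i)))
    (hθ : HasDerivAt θ (-∇ (fun θ' ↦ c * ∑ i, ℓ i (f θ' (x i))) (θ t)) t) :
    HasDerivAt (fun s ↦ f (θ s) x')
      (-c * ∑ i, deriv (ℓ i) (f (θ t) (x i)) * neuralTangentKernel f (θ t) (x i) x') t := by
  rw [← inner_gradient_neg_gradient_loss c hf hℓ]
  exact hasDerivAt_comp_of_hasGradientAt hf'.hasGradientAt hθ

end NeuralTangentKernel

/-- **Theorem 1 (empirical-loss form).** If `θ` follows the gradient flow of the empirical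
loss `E(θ) = (1/n) ∑ᵢ ℓᵢ(f(θ, xᵢ))` in parameter space, then for every input `x` the
function value `f(θ(t), x)` evolves according to the kernel gradient flow for the
empirical Neural Tangent Kernel `Θ_θ(x, x') = ⟪∇_θ f(θ, x), ∇_θ f(θ, x')⟫`. -/
theorem function_evolution_is_ntk_gradient_flow
    {P : ℕ} {X : Type*} (f : EuclideanSpace ℝ (Fin P) → X → ℝ)
    (hf : ∀ x : X, ContDiff ℝ 1 (fun θ => f θ x))
    (n : ℕ) (hn : 0 < n) (x : Fin n → X) (ℓ : Fin n → ℝ → ℝ)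
    (hℓ : ∀ i, ContDiff ℝ 1 (ℓ i))
    (E : EuclideanSpace ℝ (Fin P) → ℝ)
    (hE : E = fun θ => (1 / (n : ℝ)) * ∑ i, ℓ i (f θ (x i)))
    (θ : ℝ → EuclideanSpace ℝ (Fin P))
    (hθ : ∀ t : ℝ, HasDerivAt θ (-(gradient E (θ t))) t) :
    ∀ (x' : X) (t : ℝ),
      HasDerivAt (fun t => f (θ t) x')
        (-(1 / (n : ℝ)) * ∑ i, deriv (ℓ i) (f (θ t) (x i)) *
          ⟪gradient (fun θ' => f θ' (x i)) (θ t),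
           gradient (fun θ' => f θ' x') (θ t)⟫) t := by
  subst hE
  have hfd (y : X) : Differentiable ℝ (fun θ ↦ f θ y) := (hf y).differentiable one_ne_zero
  exact fun x' t ↦ function_evolution_is_ntk_gradient_flow_general (1 / (n : ℝ))
    (fun i ↦ hfd (x i) _) (hfd x' _) (fun i ↦ (hℓ i).differentiable one_ne_zero _) (hθ t)
end

section
/- Fix L ≥ 1, weight matrices W^1, …, W^{L+1} and perturbed weight matrices W̃^1, …, W̃^{L+1} of the same sizes, and real numbers s > 0 and ε ≥ 0 with ‖W^h‖₂ ≤ s and ‖W̃^h − W^h‖₂ ≤ ε for every h. Let x be an input row vector with ‖x‖ ≤ 1, let g^h(x) denote the layers of the ReLU network with weights W^1,…,W^{L+1} (with g^{L+1}(x) := f(x) the network output), and let g̃^h(x) denote the layers of the ReLU network with the perturbed weights W̃^1,…,W̃^{L+1}. Then for every h with 1 ≤ h ≤ L+1, ‖g̃^h(x) − g^h(x)‖ ≤ (s + ε)^h − s^h. (This is an exact-constant form of Lemma 1 on the perturbation of ReLU-network activations under weight perturbations.) -/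
/-- Euclidean norm of a finite real vector. -/
noncomputable def evnorm {n : ℕ} (v : Fin n → ℝ) : ℝ :=
  ‖(WithLp.equiv 2 (Fin n → ℝ)).symm v‖

/-- ℓ²-operator (spectral) norm of a real matrix. -/
noncomputable def specNorm {m n : ℕ} (A : Matrix (Fin m) (Fin n) ℝ) : ℝ :=
  ‖LinearMap.toContinuousLinearMap (Matrix.toEuclideanLin A)‖

/-- The layers of a ReLU network: `reluNet d W x 0 = x` and
`reluNet d W x (h+1) = σ(reluNet d W x h ⬝ W h)` (entrywise ReLU), where `W h` is the
weight matrix of layer `h+1` (so `W 0, …, W L` are the paper's `W^1, …, W^{L+1}`). -/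
noncomputable def reluNet (d : ℕ → ℕ)
    (W : ∀ h : ℕ, Matrix (Fin (d h)) (Fin (d (h + 1))) ℝ)
    (x : Fin (d 0) → ℝ) : ∀ h : ℕ, Fin (d h) → ℝ
  | 0 => x
  | h + 1 => fun i => max (Matrix.vecMul (reluNet d W x h) (W h) i) 0

/-!
With `g`, `g'` the layers of the two networks and `A`, `A'` their linear maps,
`A' g' - A g = A' (g' - g) + (A' - A) g`. If `‖g‖ ≤ a` and `‖g' - g‖ ≤ b - a`, where `‖A‖ ≤ s` and
`‖A' - A‖ ≤ ε`, this has norm at most `(s + ε) (b - a) + ε a = b (s + ε) - a s`. Passing to the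
next layer thus multiplies `a` by `s` and `b` by `s + ε`, and a `1`-Lipschitz activation fixing `0`
preserves both bounds.
-/

section Layer

variable {𝕜 : Type*} [NontriviallyNormedField 𝕜]

section Step

variable {E F : Type*} [SeminormedAddCommGroup E] [NormedSpace 𝕜 E]
  [SeminormedAddCommGroup F] [NormedSpace 𝕜 F]

lemma norm_apply_sub_apply_le {A A' : E →L[𝕜] F} {v v' : E} {s ε a b : ℝ}
    (hA : ‖A‖ ≤ s) (hA' : ‖A' - A‖ ≤ ε) (hv : ‖v‖ ≤ a) (hv' : ‖v' - v‖ ≤ b - a) :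
    ‖A' v' - A v‖ ≤ b * (s + ε) - a * s := by
  have norm_A' : ‖A'‖ ≤ s + ε := (norm_le_norm_add_norm_sub' A' A).trans (add_le_add hA hA')
  calc
    ‖A' v' - A v‖ = ‖A' (v' - v) + (A' - A) v‖ := by
      rw [map_sub, sub_apply, sub_add_sub_cancel]
    _ ≤ ‖A' (v' - v)‖ + ‖(A' - A) v‖ := norm_add_le _ _
    _ ≤ (s + ε) * (b - a) + ε * a :=
      add_le_add (A'.le_of_opNorm_le_of_le norm_A' hv') ((A' - A).le_of_opNorm_le_of_le hA' hv)
    _ = b * (s + ε) - a * s := by ring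

end Step

variable {E : ℕ → Type*} [∀ h, SeminormedAddCommGroup (E h)] [∀ h, NormedSpace 𝕜 (E h)]

/-- The layers of the feedforward network on input `x` with linear maps `A h` and activations
`φ h`, indexed so that layer `0` is the input and `φ h` acts on layer `h + 1`. -/
def layer (φ : ∀ h, E (h + 1) → E (h + 1)) (A : ∀ h, E h →L[𝕜] E (h + 1)) (x : E 0) :
    ∀ h, E h
  | 0 => x
  | h + 1 => φ h (A h (layer φ A x h))

variable {φ : ∀ h, E (h + 1) → E (h + 1)} {A A' : ∀ h, E h →L[𝕜] E (h + 1)} {x : E 0}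
  {s ε : ℕ → ℝ} {r : ℝ}

lemma norm_layer_le (hφ : ∀ h, LipschitzWith 1 (φ h)) (hφ₀ : ∀ h, φ h 0 = 0) (hx : ‖x‖ ≤ r)
    {h : ℕ} (hA : ∀ k < h, ‖A k‖ ≤ s k) :
    ‖layer φ A x h‖ ≤ r * ∏ k ∈ Finset.range h, s k := by
  induction h with
  | zero => simpa [layer] using hx
  | succ h ih =>
    calc
      ‖layer φ A x (h + 1)‖ ≤ ‖A h (layer φ A x h)‖ := by
        simpa [layer] using (hφ h).norm_le_mul (hφ₀ h) (A h (layer φ A x h))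
      _ ≤ s h * (r * ∏ k ∈ Finset.range h, s k) :=
        (A h).le_of_opNorm_le_of_le (hA h h.lt_succ_self) (ih fun k hk => hA k (by lia))
      _ = r * ∏ k ∈ Finset.range (h + 1), s k := by rw [Finset.prod_range_succ]; ring

lemma norm_layer_sub_layer_le (hφ : ∀ h, LipschitzWith 1 (φ h)) (hφ₀ : ∀ h, φ h 0 = 0)
    (hx : ‖x‖ ≤ r) {h : ℕ} (hA : ∀ k < h, ‖A k‖ ≤ s k) (hA' : ∀ k < h, ‖A' k - A k‖ ≤ ε k) :
    ‖layer φ A' x h - layer φ A x h‖ ≤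
      r * ∏ k ∈ Finset.range h, (s k + ε k) - r * ∏ k ∈ Finset.range h, s k := by
  induction h with
  | zero => simp [layer]
  | succ h ih =>
    have hA_prev : ∀ k < h, ‖A k‖ ≤ s k := fun k hk => hA k (by lia)
    have hA'_prev : ∀ k < h, ‖A' k - A k‖ ≤ ε k := fun k hk => hA' k (by lia)
    calc
      ‖layer φ A' x (h + 1) - layer φ A x (h + 1)‖
          ≤ ‖A' h (layer φ A' x h) - A h (layer φ A x h)‖ := by
        simpa [layer] using (hφ h).norm_sub_le (A' h (layer φ A' x h)) (A h (layer φ A x h))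
      _ ≤ r * (∏ k ∈ Finset.range h, (s k + ε k)) * (s h + ε h) -
          r * (∏ k ∈ Finset.range h, s k) * s h :=
        norm_apply_sub_apply_le (hA h h.lt_succ_self) (hA' h h.lt_succ_self)
          (norm_layer_le hφ hφ₀ hx hA_prev) (ih hA_prev hA'_prev)
      _ = _ := by simp only [Finset.prod_range_succ, mul_assoc]

theorem relu_net_perturbation_bound_general (hφ : ∀ h, LipschitzWith 1 (φ h))
    (hφ₀ : ∀ h, φ h 0 = 0) (hx : ‖x‖ ≤ r) {L : ℕ}
    (hA : ∀ h ≤ L, ‖A h‖ ≤ s h) (hA' : ∀ h ≤ L, ‖A' h - A h‖ ≤ ε h) :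
    (∀ h ≤ L, ‖layer φ A' x h - layer φ A x h‖ ≤
      r * ∏ k ∈ Finset.range h, (s k + ε k) - r * ∏ k ∈ Finset.range h, s k) ∧
    ‖A' L (layer φ A' x L) - A L (layer φ A x L)‖ ≤
      r * ∏ k ∈ Finset.range (L + 1), (s k + ε k) - r * ∏ k ∈ Finset.range (L + 1), s k := by
  have hidden : ∀ h ≤ L, ‖layer φ A' x h - layer φ A x h‖ ≤
      r * ∏ k ∈ Finset.range h, (s k + ε k) - r * ∏ k ∈ Finset.range h, s k := fun h hh =>
    norm_layer_sub_layer_le hφ hφ₀ hx (fun k hk => hA k (by lia)) fun k hk => hA' k (by lia)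
  refine ⟨hidden, ?_⟩
  simp only [Finset.prod_range_succ, ← mul_assoc]
  exact norm_apply_sub_apply_le (hA L le_rfl) (hA' L le_rfl)
    (norm_layer_le hφ hφ₀ hx fun k hk => hA k hk.le) (hidden L le_rfl)

end Layer

section Euclidean

variable {ι : Type*}

/-- The entrywise ReLU as a self-map of Euclidean space. -/
noncomputable def euclideanRelu (v : EuclideanSpace ℝ ι) : EuclideanSpace ℝ ι :=
  WithLp.toLp 2 fun i => max (v i) 0

lemma euclideanRelu_zero : euclideanRelu (0 : EuclideanSpace ℝ ι) = 0 := by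
  ext i
  simp [euclideanRelu]

lemma lipschitzWith_euclideanRelu [Fintype ι] :
    LipschitzWith 1 (euclideanRelu : EuclideanSpace ℝ ι → EuclideanSpace ℝ ι) := by
  refine LipschitzWith.mk_one fun v w => ?_
  rw [EuclideanSpace.dist_eq, EuclideanSpace.dist_eq]
  gcongr with i
  exact abs_max_sub_max_le_abs (v i) (w i) 0

variable {m n : ℕ}

/-- The map `v ↦ v W` on Euclidean row vectors, encoded as the column action of `Wᵀ`. -/
noncomputable def vecMulCLM (W : Matrix (Fin m) (Fin n) ℝ) :
    EuclideanSpace ℝ (Fin m) →L[ℝ] EuclideanSpace ℝ (Fin n) :=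
  LinearMap.toContinuousLinearMap (Matrix.toEuclideanLin W.transpose)

lemma vecMulCLM_toLp (W : Matrix (Fin m) (Fin n) ℝ) (v : Fin m → ℝ) :
    vecMulCLM W (WithLp.toLp 2 v) = WithLp.toLp 2 (Matrix.vecMul v W) := by
  simp [vecMulCLM, Matrix.mulVec_transpose]

lemma vecMulCLM_sub (W W' : Matrix (Fin m) (Fin n) ℝ) :
    vecMulCLM (W - W') = vecMulCLM W - vecMulCLM W' := by
  simp only [vecMulCLM, Matrix.transpose_sub, map_sub]

open scoped Matrix.Norms.L2Operator in
lemma norm_vecMulCLM (W : Matrix (Fin m) (Fin n) ℝ) : ‖vecMulCLM W‖ = specNorm W :=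
  calc
    ‖vecMulCLM W‖ = ‖W.transpose‖ := rfl
    _ = ‖W‖ := by
      rw [← Matrix.conjTranspose_eq_transpose_of_trivial, Matrix.l2_opNorm_conjTranspose]
    _ = specNorm W := rfl

lemma toLp_reluNet (d : ℕ → ℕ) (W : ∀ h : ℕ, Matrix (Fin (d h)) (Fin (d (h + 1))) ℝ)
    (x : Fin (d 0) → ℝ) (h : ℕ) :
    WithLp.toLp 2 (reluNet d W x h) =
      layer (E := fun h => EuclideanSpace ℝ (Fin (d h))) (fun _ => euclideanRelu)
        (fun h => vecMulCLM (W h)) (WithLp.toLp 2 x) h := by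
  induction h with
  | zero => rfl
  | succ h ih => rw [layer, ← ih, vecMulCLM_toLp]; rfl

end Euclidean

/-- **Lemma 1 (exact-constant form).** If every weight matrix has spectral norm at most `s`
and every weight perturbation has spectral norm at most `ε`, and `‖x‖ ≤ 1`, then every
hidden activation of the perturbed ReLU network deviates from the unperturbed one by at
most `(s+ε)^h − s^h`, and the network outputs (`g^{L+1} = f`, the final linear layer)
deviate by at most `(s+ε)^{L+1} − s^{L+1}`. -/
theorem relu_net_perturbation_bound
    (L : ℕ) (hL : 1 ≤ L) (d : ℕ → ℕ)
    (W W' : ∀ h : ℕ, Matrix (Fin (d h)) (Fin (d (h + 1))) ℝ)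
    (s ε : ℝ) (hs : 0 < s) (hε : 0 ≤ ε)
    (hW : ∀ h, h ≤ L → specNorm (W h) ≤ s)
    (hW' : ∀ h, h ≤ L → specNorm (W' h - W h) ≤ ε)
    (x : Fin (d 0) → ℝ) (hx : evnorm x ≤ 1) :
    (∀ h, 1 ≤ h → h ≤ L →
      evnorm (reluNet d W' x h - reluNet d W x h) ≤ (s + ε) ^ h - s ^ h) ∧
    evnorm (Matrix.vecMul (reluNet d W' x L) (W' L) -
        Matrix.vecMul (reluNet d W x L) (W L)) ≤ (s + ε) ^ (L + 1) - s ^ (L + 1) := by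
  have bound := relu_net_perturbation_bound_general
    (E := fun h => EuclideanSpace ℝ (Fin (d h))) (φ := fun _ => euclideanRelu)
    (A := fun h => vecMulCLM (W h)) (A' := fun h => vecMulCLM (W' h))
    (x := WithLp.toLp 2 x) (s := fun _ => s) (ε := fun _ => ε)
    (fun _ => lipschitzWith_euclideanRelu) (fun _ => euclideanRelu_zero) hx
    (fun h hh => (norm_vecMulCLM (W h)).trans_le (hW h hh))
    (fun h hh => by rw [← vecMulCLM_sub, norm_vecMulCLM]; exact hW' h hh)
  simp only [← toLp_reluNet, vecMulCLM_toLp, Finset.prod_const, Finset.card_range, one_mul] at bound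
  exact ⟨fun h _ => bound.1 h, bound.2⟩
end

section
/- Let E : ℝ^P → ℝ be continuously differentiable, let θ : ℝ → ℝ^P be a differentiable curve with θ'(t) = −∇E(θ(t)) for all t, let L be a natural number, K ≥ 0, T ≥ 0, and suppose that ‖∇E(θ(t)) − ∇E(θ(0))‖ ≤ K·t^{L+1} for all t ∈ [0, T]. Then the deviation of E(θ(T)) from its first-order (one-step) surrogate E(θ(0)) − T·‖∇E(θ(0))‖² satisfies | E(θ(T)) − E(θ(0)) + T·‖∇E(θ(0))‖² | ≤ (2K‖∇E(θ(0))‖/(L+2))·T^{L+2} + (K²/(2L+3))·T^{2L+3}. (This is the precise quantitative mechanism behind Theorem 5's bound error(T) ≤ O(T^{2L+3}) on the difference between the regularized meta-objective Ẽ(T, f_θ) and the closed-form meta-objective Ē(T, f_θ): along the gradient flow, E(θ(T)) = E(θ(0)) − ∫₀^T ‖∇E(θ(t))‖² dt, and the gradient along the flow of an L-hidden-layer network deviates from its initial value by at most K·t^{L+1}.) -/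
/-! Along a gradient flow the energy dissipates at the rate `‖∇E(θ(t))‖²`, so the surrogate error is
the integral of `‖∇E(θ(0))‖² - ‖∇E(θ(t))‖²` over `[0, T]`. Factoring this difference of squares
bounds it by `2‖∇E(θ(0))‖·δ + δ²`, where `δ = K·t^{L+1}` bounds the deviation of the gradient;
integrating in `t` gives the two error terms. -/

open MeasureTheory Set

lemma abs_norm_sq_sub_norm_sq_le {F : Type*} [SeminormedAddCommGroup F] {x y : F} {δ : ℝ}
    (h : ‖x - y‖ ≤ δ) : |‖x‖ ^ 2 - ‖y‖ ^ 2| ≤ 2 * ‖y‖ * δ + δ ^ 2 := by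
  have hdiff : |‖x‖ - ‖y‖| ≤ δ := (abs_norm_sub_norm_le x y).trans h
  have hδ : 0 ≤ δ := (norm_nonneg _).trans h
  have hsum : ‖x‖ + ‖y‖ ≤ 2 * ‖y‖ + δ := by linarith [(abs_le.mp hdiff).2]
  calc |‖x‖ ^ 2 - ‖y‖ ^ 2| = (‖x‖ + ‖y‖) * |‖x‖ - ‖y‖| := by
        rw [sq_sub_sq, abs_mul, abs_of_nonneg (by positivity)]
    _ ≤ (2 * ‖y‖ + δ) * δ := by gcongr
    _ = 2 * ‖y‖ * δ + δ ^ 2 := by ring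

lemma integral_const_mul_rpow_add_const_mul_rpow {p q : ℝ} (hp : -1 < p) (hq : -1 < q)
    (A B T : ℝ) :
    ∫ t in (0 : ℝ)..T, (A * t ^ p + B * t ^ q) =
      A / (p + 1) * T ^ (p + 1) + B / (q + 1) * T ^ (q + 1) := by
  rw [intervalIntegral.integral_add ((intervalIntegral.intervalIntegrable_rpow' hp).const_mul A)
      ((intervalIntegral.intervalIntegrable_rpow' hq).const_mul B),
    intervalIntegral.integral_const_mul, intervalIntegral.integral_const_mul,
    integral_rpow (.inl hp), integral_rpow (.inl hq),
    Real.zero_rpow (by linarith), Real.zero_rpow (by linarith)]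
  ring

section GradientFlow

variable {F : Type*} [NormedAddCommGroup F] [InnerProductSpace ℝ F] [CompleteSpace F]
  {E : F → ℝ} {θ : ℝ → F}

lemma hasDerivWithinAt_comp_of_hasGradientAt {g v : F} {s : Set ℝ} {t : ℝ}
    (hE : HasGradientAt E g (θ t)) (hθ : HasDerivWithinAt θ v s t) :
    HasDerivWithinAt (fun τ => E (θ τ)) (inner ℝ g v) s t :=
  hE.hasFDerivAt.comp_hasDerivWithinAt t hθ

lemma hasDerivWithinAt_energy_of_isIntegralCurveOn {s : Set ℝ} {t : ℝ}
    (hθ : IsIntegralCurveOn θ (fun _ x => -gradient E x) s) (ht : t ∈ s)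
    (hE : DifferentiableAt ℝ E (θ t)) :
    HasDerivWithinAt (fun τ => E (θ τ)) (-‖gradient E (θ t)‖ ^ 2) s t := by
  simpa only [inner_neg_right, real_inner_self_eq_norm_sq] using
    hasDerivWithinAt_comp_of_hasGradientAt hE.hasGradientAt (hθ t ht)

lemma abs_energy_sub_add_mul_le_integral {B : ℝ → ℝ} {a b c : ℝ} (hab : a ≤ b)
    (hθ : IsIntegralCurveOn θ (fun _ x => -gradient E x) (Icc a b))
    (hE : ∀ t ∈ Icc a b, DifferentiableAt ℝ E (θ t))
    (hB : ∀ t ∈ Ioo a b, |‖gradient E (θ t)‖ ^ 2 - c| ≤ B t)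
    (hBint : IntervalIntegrable B volume a b) :
    |E (θ b) - E (θ a) + (b - a) * c| ≤ ∫ t in a..b, B t := by
  have hderivWithin : ∀ t ∈ Icc a b, HasDerivWithinAt (fun τ => E (θ τ) + τ * c)
      (-‖gradient E (θ t)‖ ^ 2 + 1 * c) (Icc a b) t := fun t ht =>
    (hasDerivWithinAt_energy_of_isIntegralCurveOn hθ ht (hE t ht)).add
      ((hasDerivWithinAt_id t _).mul_const c)
  have hderiv : ∀ t ∈ Ioo a b, HasDerivAt (fun τ => E (θ τ) + τ * c)
      (-‖gradient E (θ t)‖ ^ 2 + 1 * c) t := fun t ht =>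
    (hderivWithin t (Ioo_subset_Icc_self ht)).hasDerivAt (Icc_mem_nhds ht.1 ht.2)
  have hbound : ∀ t ∈ Ioo a b, ‖deriv (fun τ => E (θ τ) + τ * c) t‖ ≤ B t := fun t ht => by
    rw [(hderiv t ht).deriv, one_mul, neg_add_eq_sub, Real.norm_eq_abs, abs_sub_comm]
    exact hB t ht
  calc |E (θ b) - E (θ a) + (b - a) * c| = ‖(E (θ b) + b * c) - (E (θ a) + a * c)‖ := by
        rw [Real.norm_eq_abs]; ring_nf
    _ ≤ ∫ t in a..b, B t := norm_sub_le_integral_of_norm_deriv_le_of_le hab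
        (fun t ht => (hderivWithin t ht).continuousWithinAt)
        (fun t ht => (hderiv t ht).differentiableAt.differentiableWithinAt)
        (.of_forall hbound) hBint

theorem gradient_flow_surrogate_error_bound_general {L K T : ℝ} (hL : -3 / 2 < L) (hT : 0 ≤ T)
    (hθ : IsIntegralCurveOn θ (fun _ x => -gradient E x) (Icc 0 T))
    (hE : ∀ t ∈ Icc 0 T, DifferentiableAt ℝ E (θ t))
    (hdev : ∀ t ∈ Ioo 0 T, ‖gradient E (θ t) - gradient E (θ 0)‖ ≤ K * t ^ (L + 1)) :
    |E (θ T) - E (θ 0) + T * ‖gradient E (θ 0)‖ ^ 2| ≤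
      (2 * K * ‖gradient E (θ 0)‖ / (L + 2)) * T ^ (L + 2) +
        (K ^ 2 / (2 * L + 3)) * T ^ (2 * L + 3) := by
  set G := ‖gradient E (θ 0)‖
  have hp : -1 < L + 1 := by linarith
  have hq : -1 < 2 * L + 2 := by linarith
  have hrate : ∀ t ∈ Ioo 0 T, |‖gradient E (θ t)‖ ^ 2 - G ^ 2| ≤
      2 * K * G * t ^ (L + 1) + K ^ 2 * t ^ (2 * L + 2) := fun t ht => by
    have hsq : t ^ (2 * L + 2) = (t ^ (L + 1)) ^ 2 := by
      rw [← Real.rpow_mul_natCast ht.1.le]; ring_nf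
    calc _ ≤ 2 * G * (K * t ^ (L + 1)) + (K * t ^ (L + 1)) ^ 2 :=
          abs_norm_sq_sub_norm_sq_le (hdev t ht)
      _ = _ := by rw [hsq]; ring
  calc |E (θ T) - E (θ 0) + T * G ^ 2|
      ≤ ∫ t in (0 : ℝ)..T, (2 * K * G * t ^ (L + 1) + K ^ 2 * t ^ (2 * L + 2)) := by
        simpa only [sub_zero] using abs_energy_sub_add_mul_le_integral hT hθ hE hrate
          (((intervalIntegral.intervalIntegrable_rpow' hp).const_mul _).add
            ((intervalIntegral.intervalIntegrable_rpow' hq).const_mul _))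
    _ = _ := by
        rw [integral_const_mul_rpow_add_const_mul_rpow hp hq]
        ring_nf

end GradientFlow

/-- **Quantitative mechanism behind Theorem 5.** If `θ` is a gradient flow of a
continuously differentiable `E` and the gradient along the flow deviates from its initial
value by at most `K·t^{L+1}` on `[0, T]`, then the deviation of `E(θ(T))` from its
one-step surrogate `E(θ(0)) − T·‖∇E(θ(0))‖²` is at most
`(2K‖∇E(θ(0))‖/(L+2))·T^{L+2} + (K²/(2L+3))·T^{2L+3}`. -/
theorem gradient_flow_surrogate_error_bound
    {P : ℕ} (E : EuclideanSpace ℝ (Fin P) → ℝ) (hE : ContDiff ℝ 1 E)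
    (θ : ℝ → EuclideanSpace ℝ (Fin P))
    (hθ : ∀ t : ℝ, HasDerivAt θ (-(gradient E (θ t))) t)
    (L : ℕ) (K T : ℝ) (hK : 0 ≤ K) (hT : 0 ≤ T)
    (hdev : ∀ t ∈ Set.Icc (0 : ℝ) T,
      ‖gradient E (θ t) - gradient E (θ 0)‖ ≤ K * t ^ (L + 1)) :
    |E (θ T) - E (θ 0) + T * ‖gradient E (θ 0)‖ ^ 2| ≤
      (2 * K * ‖gradient E (θ 0)‖ / ((L : ℝ) + 2)) * T ^ (L + 2) +
        (K ^ 2 / (2 * (L : ℝ) + 3)) * T ^ (2 * L + 3) := by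
  have hL : (-3 / 2 : ℝ) < L := by linarith [L.cast_nonneg (α := ℝ)]
  exact_mod_cast gradient_flow_surrogate_error_bound_general hL hT
    (fun t _ => (hθ t).hasDerivWithinAt) (fun t _ => hE.differentiable one_ne_zero (θ t))
    (fun t ht => by exact_mod_cast hdev t (Ioo_subset_Icc_self ht))
end

section
/- Let E : ℝ^P → ℝ be differentiable with K-Lipschitz gradient, i.e., ‖∇E(a) − ∇E(b)‖ ≤ K‖a − b‖ for all a, b ∈ ℝ^P with K > 0, let α > 0, θ_0 ∈ ℝ^P, and define the gradient-descent iterates θ_{i+1} = θ_i − α∇E(θ_i) for i ≥ 0. Then for every i ≥ 0: (i) ‖∇E(θ_i)‖ ≤ (1 + αK)^i · ‖∇E(θ_0)‖; (ii) ‖∇E(θ_i) − ∇E(θ_0)‖ ≤ ((1 + αK)^i − 1) · ‖∇E(θ_0)‖; and consequently (iii) for every k ≥ 1, | ∑_{i=0}^{k−1} ⟨∇E(θ_i), ∇E(θ_0)⟩ − k·‖∇E(θ_0)‖² | ≤ ‖∇E(θ_0)‖² · ∑_{i=0}^{k−1} ((1 + αK)^i − 1). (This quantifies the mechanism behind Theorems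 3 and 4: the k-step MAML surrogate objective M_k, whose correction terms are β_i = α⟨∇E(θ_i), ∇E(θ_0)⟩, is close to the regularized objective Ẽ(kα, ·), whose correction term is kα‖∇E(θ_0)‖², whenever the step size α is small.) -/
open scoped RealInnerProductSpace

/-!
Let `V` be a `K`-Lipschitz field and `θ (i + 1) = θ i - α • V (θ i)`. One step displaces `θ i` by at
most `‖α‖ * ‖V (θ i)‖`, so `u i = V (θ i)` satisfies `‖u (i + 1) - u i‖ ≤ c * ‖u i‖` with
`c = ‖α‖ * K`. This gives geometric growth of `‖u i‖`, and summing the increments gives a geometric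
series for `‖u i - u 0‖`. The inner products with `u 0` then follow from Cauchy–Schwarz applied to
`u i - u 0`.
-/

section RelativeIncrements

variable {F : Type*} [SeminormedAddCommGroup F] {u : ℕ → F} {c : ℝ}

theorem norm_le_pow_mul_of_norm_sub_le_mul (hc : 0 ≤ c)
    (hu : ∀ i, ‖u (i + 1) - u i‖ ≤ c * ‖u i‖) (n : ℕ) :
    ‖u n‖ ≤ (1 + c) ^ n * ‖u 0‖ := by
  refine le_geom (u := fun i => ‖u i‖) (by positivity) n fun i _ => ?_
  calc
    ‖u (i + 1)‖ ≤ ‖u i‖ + ‖u (i + 1) - u i‖ := norm_le_norm_add_norm_sub' _ _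
    _ ≤ ‖u i‖ + c * ‖u i‖ := by gcongr; exact hu i
    _ = (1 + c) * ‖u i‖ := by ring

theorem norm_sub_le_pow_sub_one_mul_of_norm_sub_le_mul (hc : 0 ≤ c)
    (hu : ∀ i, ‖u (i + 1) - u i‖ ≤ c * ‖u i‖) (n : ℕ) :
    ‖u n - u 0‖ ≤ ((1 + c) ^ n - 1) * ‖u 0‖ := by
  have increment_le (i : ℕ) : ‖u (i + 1) - u i‖ ≤ c * ((1 + c) ^ i * ‖u 0‖) :=
    (hu i).trans <| by gcongr; exact norm_le_pow_mul_of_norm_sub_le_mul hc hu i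
  calc
    ‖u n - u 0‖ = ‖∑ i ∈ Finset.range n, (u (i + 1) - u i)‖ := by rw [Finset.sum_range_sub]
    _ ≤ ∑ i ∈ Finset.range n, c * ((1 + c) ^ i * ‖u 0‖) :=
      norm_sum_le_of_le _ fun i _ => increment_le i
    _ = ((1 + c - 1) * ∑ i ∈ Finset.range n, (1 + c) ^ i) * ‖u 0‖ := by
      rw [← Finset.mul_sum, ← Finset.sum_mul]
      ring
    _ = ((1 + c) ^ n - 1) * ‖u 0‖ := by rw [mul_geom_sum]

end RelativeIncrements

theorem norm_apply_sub_smul_sub_apply_le {𝕜 F G : Type*} [SeminormedRing 𝕜]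
    [SeminormedAddCommGroup F] [Module 𝕜 F] [IsBoundedSMul 𝕜 F] [SeminormedAddCommGroup G]
    {V : F → G} {K : NNReal} (hV : LipschitzWith K V) (α : 𝕜) (x v : F) :
    ‖V (x - α • v) - V x‖ ≤ ‖α‖ * K * ‖v‖ :=
  calc
    ‖V (x - α • v) - V x‖ ≤ K * ‖x - α • v - x‖ := hV.norm_sub_le _ _
    _ = K * ‖α • v‖ := by rw [sub_sub_cancel_left, norm_neg]
    _ ≤ K * (‖α‖ * ‖v‖) := by gcongr; exact norm_smul_le α v
    _ = ‖α‖ * K * ‖v‖ := by ring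

section InnerProduct

variable {𝕜 F : Type*} [RCLike 𝕜] [SeminormedAddCommGroup F] [InnerProductSpace 𝕜 F]

theorem norm_sum_inner_sub_card_mul_norm_sq_le {ι : Type*} (s : Finset ι) (u : ι → F) (v : F) :
    ‖(∑ i ∈ s, inner 𝕜 (u i) v) - s.card * (‖v‖ : 𝕜) ^ 2‖ ≤ (∑ i ∈ s, ‖u i - v‖) * ‖v‖ :=
  calc
    ‖(∑ i ∈ s, inner 𝕜 (u i) v) - s.card * (‖v‖ : 𝕜) ^ 2‖
        = ‖∑ i ∈ s, inner 𝕜 (u i - v) v‖ := by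
      simp only [inner_sub_left, Finset.sum_sub_distrib, inner_self_eq_norm_sq_to_K,
        Finset.sum_const, nsmul_eq_mul]
    _ ≤ ∑ i ∈ s, ‖u i - v‖ * ‖v‖ := norm_sum_le_of_le _ fun _ _ => norm_inner_le_norm _ _
    _ = (∑ i ∈ s, ‖u i - v‖) * ‖v‖ := by rw [Finset.sum_mul]

theorem gradient_descent_inner_product_bounds_general {V : F → F} {K : NNReal}
    (hV : LipschitzWith K V) (α : 𝕜) {θ : ℕ → F} (hθ : ∀ i, θ (i + 1) = θ i - α • V (θ i)) :
    (∀ i, ‖V (θ i)‖ ≤ (1 + ‖α‖ * K) ^ i * ‖V (θ 0)‖) ∧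
    (∀ i, ‖V (θ i) - V (θ 0)‖ ≤ ((1 + ‖α‖ * K) ^ i - 1) * ‖V (θ 0)‖) ∧
    ∀ k : ℕ,
      ‖(∑ i ∈ Finset.range k, inner 𝕜 (V (θ i)) (V (θ 0))) - k * (‖V (θ 0)‖ : 𝕜) ^ 2‖ ≤
        ‖V (θ 0)‖ ^ 2 * ∑ i ∈ Finset.range k, ((1 + ‖α‖ * K) ^ i - 1) := by
  have hc : 0 ≤ ‖α‖ * K := by positivity
  have hstep (i : ℕ) : ‖V (θ (i + 1)) - V (θ i)‖ ≤ ‖α‖ * K * ‖V (θ i)‖ :=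
    hθ i ▸ norm_apply_sub_smul_sub_apply_le hV α (θ i) (V (θ i))
  have hdrift := norm_sub_le_pow_sub_one_mul_of_norm_sub_le_mul (u := fun i => V (θ i)) hc hstep
  refine ⟨norm_le_pow_mul_of_norm_sub_le_mul (u := fun i => V (θ i)) hc hstep, hdrift,
    fun k => ?_⟩
  calc
    _ ≤ (∑ i ∈ Finset.range k, ‖V (θ i) - V (θ 0)‖) * ‖V (θ 0)‖ := by
      simpa only [Finset.card_range] using norm_sum_inner_sub_card_mul_norm_sq_le (𝕜 := 𝕜)
        (Finset.range k) (fun i => V (θ i)) (V (θ 0))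
    _ ≤ (∑ i ∈ Finset.range k, ((1 + ‖α‖ * K) ^ i - 1) * ‖V (θ 0)‖) * ‖V (θ 0)‖ := by
      gcongr with i
      exact hdrift i
    _ = ‖V (θ 0)‖ ^ 2 * ∑ i ∈ Finset.range k, ((1 + ‖α‖ * K) ^ i - 1) := by
      rw [← Finset.sum_mul]
      ring

end InnerProduct

/-- **Mechanism behind Theorems 3 and 4.** For gradient descent `θ_{i+1} = θ_i − α∇E(θ_i)`
on a function `E` with `K`-Lipschitz gradient: (i) `‖∇E(θ_i)‖ ≤ (1+αK)^i ‖∇E(θ_0)‖`;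
(ii) `‖∇E(θ_i) − ∇E(θ_0)‖ ≤ ((1+αK)^i − 1)·‖∇E(θ_0)‖`; and (iii) the sum of inner
products `∑_{i<k} ⟪∇E(θ_i), ∇E(θ_0)⟫` deviates from `k·‖∇E(θ_0)‖²` by at most
`‖∇E(θ_0)‖²·∑_{i<k} ((1+αK)^i − 1)`. -/
theorem gradient_descent_inner_product_bounds
    {P : ℕ} (E : EuclideanSpace ℝ (Fin P) → ℝ)
    (hdiff : Differentiable ℝ E) (K : ℝ) (hK : 0 < K)
    (hLip : ∀ a b : EuclideanSpace ℝ (Fin P),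
      ‖gradient E a - gradient E b‖ ≤ K * ‖a - b‖)
    (α : ℝ) (hα : 0 < α)
    (θ : ℕ → EuclideanSpace ℝ (Fin P))
    (hiter : ∀ i : ℕ, θ (i + 1) = θ i - α • gradient E (θ i)) :
    (∀ i : ℕ, ‖gradient E (θ i)‖ ≤ (1 + α * K) ^ i * ‖gradient E (θ 0)‖) ∧
    (∀ i : ℕ, ‖gradient E (θ i) - gradient E (θ 0)‖ ≤
      ((1 + α * K) ^ i - 1) * ‖gradient E (θ 0)‖) ∧
    ∀ k : ℕ, 1 ≤ k →
      |(∑ i ∈ Finset.range k, ⟪gradient E (θ i), gradient E (θ 0)⟫) -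
          k * ‖gradient E (θ 0)‖ ^ 2| ≤
        ‖gradient E (θ 0)‖ ^ 2 * ∑ i ∈ Finset.range k, ((1 + α * K) ^ i - 1) := by
  lift K to NNReal using hK.le
  obtain ⟨hgrowth, hdrift, hinner⟩ := gradient_descent_inner_product_bounds_general
    (lipschitzWith_iff_norm_sub_le.mpr hLip) α hiter
  rw [Real.norm_of_nonneg hα.le] at hgrowth hdrift hinner
  exact ⟨hgrowth, hdrift, fun k _ => hinner k⟩
end
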